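/- arXiv:2008.09364 — 3 statements merged into one kernel-verified Lean document; each statement's English description precedes it below -/
import Mathlib

section
/- Let p/q be an irreducible fraction with 0 < p < q and gcd(p,q) = 1, and let (x/r, y/s) be its pair of parents. Then i(r(w(p/q))) = w(s/q), where r(u) denotes the reversal of an LR word u and i(u) denotes the word obtained from u by replacing every letter L by R and every letter R by L. -/
/-- The two-letter alphabet for `LR` words. -/
inductive LR : Type
  | L : LR
  | R : LR
  deriving DecidableEq

/-- The operation `i`: replace every `L` by `R` and every `R` by `L`. -/
def LR.flip : LR → LR
  | .L => .R
  | .R => .L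

/-- The Stern–Brocot path (recorded from the root `1/2` downwards) of the fraction
`p/q ∈ (0,1)`: at each step we pass to the left or right subinterval. -/
def sbPath (p q : ℕ) : List LR :=
  if h1 : 0 < p ∧ p + p < q then
    LR.L :: sbPath p (q - p)
  else if h2 : p < q ∧ q < p + p then
    LR.R :: sbPath (p + p - q) p
  else []
termination_by q
decreasing_by
  · omega
  · omega

/-- The `LR` word `w(α)` of a rational `α ∈ (0,1)`: the sequence of `L`/`R` steps from
the vertex `1/2` of the Stern–Brocot tree down to `α`, arranged from right to left.
It satisfies `w(1/2) = ∅` and, if `α` has parents `(β, γ)` with reduced denominators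
`b < c` (resp. `b > c`), `w(α) = L · w(γ)` (resp. `w(α) = R · w(β)`). -/
def w (α : ℚ) : List LR := (sbPath α.num.toNat α.den).reverse

/-- `(x/r, y/s)` is the pair of parents of `α`: they are Farey neighbors
(`x, y ≥ 0`, `r, s ≥ 1`, `r*y - x*s = 1`) and `α` is their Farey mediant. -/
def IsParents (x r y s : ℕ) (α : ℚ) : Prop :=
  1 ≤ r ∧ 1 ≤ s ∧ r * y = x * s + 1 ∧
    α = ((x : ℚ) + (y : ℚ)) / ((r : ℚ) + (s : ℚ))

theorem sbPath_L (p q : ℕ) (h : 0 < p) (h2 : p + p < q) :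
    sbPath p q = LR.L :: sbPath p (q - p) := by
  rw [sbPath]; simp [h, h2]

theorem sbPath_R (p q : ℕ) (h : p < q) (h2 : q < p + p) :
    sbPath p q = LR.R :: sbPath (p + p - q) p := by
  rw [sbPath]
  have : ¬ (p + p < q) := by omega
  simp [h, h2, this]

theorem sbPath_half : sbPath 1 2 = [] := by
  rw [sbPath]; simp

theorem sbPath_third : sbPath 1 3 = [LR.L] := by
  rw [sbPath_L _ _ (by norm_num) (by norm_num)]; simp [sbPath_half]

theorem sbPath_twothird : sbPath 2 3 = [LR.R] := by
  rw [sbPath_R _ _ (by norm_num) (by norm_num)]; simp [sbPath_half]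

theorem sbPath_child (n : ℕ) : ∀ x r y s : ℕ, r + s ≤ n → 1 ≤ r → 1 ≤ s →
    r * y = x * s + 1 → y ≤ s →
    sbPath (2 * x + y) (2 * r + s) = sbPath (x + y) (r + s) ++ [LR.L] ∧
    sbPath (x + 2 * y) (r + 2 * s) = sbPath (x + y) (r + s) ++ [LR.R] := by
  induction n with
  | zero => intros; omega
  | succ n ih =>
    intro x r y s hn hr hs h hy
    have hy1 : 1 ≤ y := by
      rcases Nat.eq_zero_or_pos y with h0 | h0
      · subst h0; omega
      · exact h0
    have hx : x < r := by
      by_contra hc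
      have h1 : r * y ≤ x * s := Nat.mul_le_mul (by omega) hy
      omega
    have key : ((r : ℤ) - 2 * x) * s + r * (2 * y - s) = 2 := by
      zify at h; linarith
    rcases lt_trichotomy (2 * (x + y)) (r + s) with hc | hc | hc
    · have hys : 2 * y ≤ s := by
        by_contra hd
        have a1 : (1 : ℤ) ≤ 2 * y - s := by omega
        have a2 : (2 : ℤ) ≤ r - 2 * x := by omega
        nlinarith
      have hxr : 2 * x ≤ r := by
        by_contra hd
        have a1 : (2 : ℤ) * y - s ≤ 0 := by omega
        have a2 : (r : ℤ) - 2 * x ≤ -1 := by omega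
        nlinarith
      have h' : (r - x) * y = x * (s - y) + 1 := by
        zify [hx.le, hy] at h ⊢; linarith
      obtain ⟨i1, i2⟩ := ih x (r - x) y (s - y) (by omega) (by omega) (by omega) h' (by omega)
      rw [sbPath_L (2 * x + y) _ (by omega) (by omega), sbPath_L (x + 2 * y) _ (by omega) (by omega),
        sbPath_L (x + y) _ (by omega) (by omega)]
      rw [show 2 * r + s - (2 * x + y) = 2 * (r - x) + (s - y) by omega,
        show r + 2 * s - (x + 2 * y) = (r - x) + 2 * (s - y) by omega,
        show r + s - (x + y) = (r - x) + (s - y) by omega, i1, i2]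
      simp
    · have e : (2 * (y : ℤ) - s) = r - 2 * x := by omega
      rw [e] at key
      have a1 : (0 : ℤ) < r - 2 * x := by
        by_contra hd
        nlinarith
      have a2 : (r : ℤ) + s ≤ 2 := by nlinarith
      obtain rfl : r = 1 := by omega
      obtain rfl : s = 1 := by omega
      obtain rfl : x = 0 := by omega
      obtain rfl : y = 1 := by omega
      simp [sbPath_half, sbPath_third, sbPath_twothird]
    · have hxr : r ≤ 2 * x := by
        by_contra hd
        have a1 : (1 : ℤ) ≤ r - 2 * x := by omega
        have a2 : (2 : ℤ) ≤ 2 * y - s ∨ (r : ℤ) - 2 * x ≥ 2 * (s : ℤ) ∨ (2 : ℤ) * y - s ≥ 0 := by omega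
        have a3 : (0 : ℤ) ≤ 2 * y - s := by omega
        rcases eq_or_lt_of_le a3 with a4 | a4
        · omega
        · have a5 : (r : ℤ) + s ≤ 2 := by nlinarith
          omega
      have hys : s < 2 * y := by
        by_contra hd
        have a1 : (2 : ℤ) * y - s ≤ 0 := by omega
        have a2 : (r : ℤ) - 2 * x ≤ 0 := by omega
        nlinarith
      have h' : x * (2 * y - s) = (2 * x - r) * y + 1 := by
        zify [hys.le, hxr] at h ⊢; linarith
      obtain ⟨i1, i2⟩ := ih (2 * x - r) x (2 * y - s) y (by omega) (by omega) (by omega) h' (by omega)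
      rw [sbPath_R (2 * x + y) _ (by omega) (by omega), sbPath_R (x + 2 * y) _ (by omega) (by omega),
        sbPath_R (x + y) _ (by omega) (by omega)]
      rw [show 2 * x + y + (2 * x + y) - (2 * r + s) = 2 * (2 * x - r) + (2 * y - s) by omega,
        show x + 2 * y + (x + 2 * y) - (r + 2 * s) = (2 * x - r) + 2 * (2 * y - s) by omega,
        show x + y + (x + y) - (r + s) = (2 * x - r) + (2 * y - s) by omega, i1, i2]
      simp

theorem sbPath_flip (n : ℕ) : ∀ x r y s : ℕ, r + s ≤ n → 1 ≤ r → 1 ≤ s →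
    r * y = x * s + 1 → y ≤ s →
    (sbPath (x + y) (r + s)).map LR.flip = (sbPath s (r + s)).reverse := by
  induction n with
  | zero => intros; omega
  | succ n ih =>
    intro x r y s hn hr hs h hy
    have hy1 : 1 ≤ y := by
      rcases Nat.eq_zero_or_pos y with h0 | h0
      · subst h0; omega
      · exact h0
    rcases lt_trichotomy r s with hc | hc | hc
    · obtain ⟨t, rfl⟩ := Nat.exists_eq_add_of_lt hc
      have hxy : x ≤ y := by
        by_contra hd
        nlinarith
      obtain ⟨z, rfl⟩ := Nat.exists_eq_add_of_le hxy
      have h' : r * z = x * (t + 1) + 1 := by linarith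
      have hz : z ≤ t + 1 := by
        by_contra hd
        have : x < r := by
          by_contra hd'
          nlinarith
        nlinarith
      rw [sbPath_R (r + t + 1) _ (by omega) (by omega),
        show r + t + 1 + (r + t + 1) - (r + (r + t + 1)) = t + 1 by omega]
      have i := ih x r z (t + 1) (by omega) hr (by omega) h' hz
      have c := (sbPath_child _ x r z (t + 1) le_rfl hr (by omega) h' hz).1
      rw [show x + (x + z) = 2 * x + z by omega,
        show r + (r + t + 1) = 2 * r + (t + 1) by omega, c,
        show r + t + 1 = r + (t + 1) by omega]
      simp [i, LR.flip]
    · subst hc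
      have : r ∣ 1 := by
        have h1 : r ∣ x * r + 1 := h ▸ dvd_mul_right r y
        exact (Nat.dvd_add_right (dvd_mul_left r x)).1 h1
      obtain rfl : r = 1 := by simpa using this
      obtain rfl : y = 1 := by omega
      obtain rfl : x = 0 := by omega
      simp [sbPath_half]
    · obtain ⟨t, rfl⟩ := Nat.exists_eq_add_of_lt hc
      have hxy : y ≤ x := by
        by_contra hd
        nlinarith
      obtain ⟨z, rfl⟩ := Nat.exists_eq_add_of_le hxy
      have h' : (t + 1) * y = z * s + 1 := by linarith
      rw [sbPath_L s _ (by omega) (by omega),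
        show s + t + 1 + s - s = t + 1 + s by omega]
      have i := ih z (t + 1) y s (by omega) (by omega) hs h' hy
      have c := (sbPath_child _ z (t + 1) y s le_rfl (by omega) hs h' hy).2
      rw [show y + z + y = z + 2 * y by omega,
        show s + t + 1 + s = t + 1 + 2 * s by omega, c]
      simp [i, LR.flip]

theorem w_div (p q : ℕ) (hq : 0 < q) (h : Nat.Coprime p q) :
    w ((p : ℚ) / (q : ℚ)) = (sbPath p q).reverse := by
  have h1 := Rat.num_div_eq_of_coprime (a := (p : ℤ)) (b := (q : ℤ)) (by omega) (by simpa using h)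
  have h2 := Rat.den_div_eq_of_coprime (a := (p : ℤ)) (b := (q : ℤ)) (by omega) (by simpa using h)
  push_cast at h1 h2
  have h3 : ((p : ℚ) / (q : ℚ)).den = q := by exact_mod_cast h2
  rw [w, h1, h3]
  simp

/-- for an irreducible fraction `p/q` with `0 < p < q` and pair of parents
`(x/r, y/s)`, one has `i(r(w(p/q))) = w(s/q)`, where `r` is word reversal and `i`
exchanges the letters `L` and `R`. -/
theorem flip_rev_word_eq (p q x r y s : ℕ) (hp : 0 < p) (hpq : p < q)
    (hcop : Nat.Coprime p q) (hpar : IsParents x r y s ((p : ℚ) / (q : ℚ))) :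
    ((w ((p : ℚ) / (q : ℚ))).reverse).map LR.flip = w ((s : ℚ) / (q : ℚ)) := by
  obtain ⟨hr, hs, h, e⟩ := hpar
  have hc1 : Nat.Coprime (x + y) (r + s) := by
    rw [← Nat.isCoprime_iff_coprime]
    refine ⟨r, -x, ?_⟩
    zify at h
    push_cast
    linarith
  have hc2 : Nat.Coprime s (r + s) := by
    rw [← Nat.isCoprime_iff_coprime]
    refine ⟨-x - y, y, ?_⟩
    zify at h
    push_cast
    linarith
  have hq : 0 < q := by omega
  have e' : ((p : ℚ) / (q : ℚ)) = ((x + y : ℕ) : ℚ) / ((r + s : ℕ) : ℚ) := by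
    rw [e]; push_cast; rfl
  have e2 : p * (r + s) = (x + y) * q := by
    rw [div_eq_div_iff (by positivity) (by positivity)] at e'
    exact_mod_cast e'
  have d1 : q ∣ r + s := hcop.symm.dvd_of_dvd_mul_left (e2 ▸ dvd_mul_left q _)
  have d2 : r + s ∣ q := hc1.symm.dvd_of_dvd_mul_left (e2 ▸ dvd_mul_left (r + s) p)
  obtain rfl : q = r + s := Nat.dvd_antisymm d1 d2
  obtain rfl : p = x + y := Nat.eq_of_mul_eq_mul_right hq e2
  have hy : y ≤ s := by
    by_contra hd
    have : x + 2 ≤ r := by omega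
    nlinarith
  rw [w_div _ _ hq hcop, w_div _ _ hq hc2, List.reverse_reverse]
  exact sbPath_flip _ x r y s le_rfl hr hs h hy
end

section
/- Let p/q be an irreducible fraction with 0 < p < q, p odd and q odd, let (x/r, y/s) be its pair of parents, and write p/q = [0, a1, …, an] with n even and a1, …, an positive integers. Then N0(a1, …, an) is even if and only if y is even, and N0(a1, …, an) is odd if and only if x is even. -/
/-- `cf [a₀, a₁, …, aₙ]` is the continued fraction
`a₀ + 1/(a₁ + 1/(a₂ + ⋯ + 1/aₙ))`. -/
def cf : List ℕ → ℚ
  | [] => 0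
  | [a] => (a : ℚ)
  | a :: t => (a : ℚ) + 1 / cf t

/-- `N₀(a₁, …, aₙ)`: the number of even integers among `a₁, …, aₙ`. -/
def N0 (l : List ℕ) : ℕ := (l.filter (fun a => a % 2 = 0)).length

theorem cf_cons_eq (a : ℕ) (t : List ℕ) : cf (a :: t) = (a : ℚ) + cf (0 :: t) := by
  cases t with
  | nil => simp [cf]
  | cons b t => simp [cf]

theorem cf_zero_cons (a : ℕ) (t : List ℕ) : cf (0 :: a :: t) = 1 / ((a : ℚ) + cf (0 :: t)) := by
  rw [← cf_cons_eq]; simp [cf]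

theorem N0_cons (a : ℕ) (t : List ℕ) :
    N0 (a :: t) = N0 t + (if a % 2 = 0 then 1 else 0) := by
  unfold N0
  by_cases h : a % 2 = 0 <;> simp [h]

def ParSt (n q u p v : ℕ) : Prop :=
  (n % 2 = 0 ∧ ((q % 2 = 1 ∧ u % 2 = 0 ∧ p % 2 = 0 ∧ v % 2 = 1) ∨
    (q % 2 = 1 ∧ u % 2 = 1 ∧ p % 2 = 1 ∧ v % 2 = 0) ∨
    (q % 2 = 0 ∧ u % 2 = 1 ∧ p % 2 = 1 ∧ v % 2 = 1))) ∨
  (n % 2 = 1 ∧ ((q % 2 = 0 ∧ u % 2 = 1 ∧ p % 2 = 1 ∧ v % 2 = 0) ∨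
    (q % 2 = 1 ∧ u % 2 = 1 ∧ p % 2 = 0 ∧ v % 2 = 1) ∨
    (q % 2 = 1 ∧ u % 2 = 0 ∧ p % 2 = 1 ∧ v % 2 = 1)))

theorem parSt_step (a n q u p v : ℕ) (h : ParSt n q u p v) :
    ParSt (n + (if a % 2 = 0 then 1 else 0)) (a * q + p) (a * u + v) q u := by
  unfold ParSt at *
  rcases Nat.mod_two_eq_zero_or_one a with h0 | h0 <;>
  rcases h with ⟨hn, ⟨h1, h2, h3, h4⟩ | ⟨h1, h2, h3, h4⟩ | ⟨h1, h2, h3, h4⟩⟩ |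
    ⟨hn, ⟨h1, h2, h3, h4⟩ | ⟨h1, h2, h3, h4⟩ | ⟨h1, h2, h3, h4⟩⟩ <;>
  simp [Nat.add_mod, Nat.mul_mod, h0, h1, h2, h3, h4, hn]

theorem cf_matrix (l : List ℕ) (hpos : ∀ a ∈ l, 0 < a) :
    ∃ q u p v : ℕ, 0 < q ∧ u ≤ q ∧ u + v ≤ q + p ∧
      (q : ℤ) * v - u * p = (-1) ^ l.length ∧
      cf (0 :: l) = (p : ℚ) / q ∧ ParSt (N0 l) q u p v := by
  induction l with
  | nil => exact ⟨1, 0, 0, 1, by simp, by simp, by simp, by simp, by simp [cf],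
      by simp [ParSt, N0]⟩
  | cons a t ih =>
    obtain ⟨q, u, p, v, hq, huq, hs, hd, hc, hP⟩ := ih (fun b hb => hpos b (by simp [hb]))
    have ha : 0 < a := hpos a (by simp)
    have key : a * u + v ≤ a * q + p := by
      obtain ⟨b, rfl⟩ : ∃ b, a = b + 1 := ⟨a - 1, by omega⟩
      have := Nat.mul_le_mul_left b huq
      nlinarith
    refine ⟨a * q + p, a * u + v, q, u, by positivity, key, by omega, ?_, ?_, ?_⟩
    · push_cast [List.length_cons, pow_succ]
      rw [← hd]; ring
    · rw [cf_zero_cons, hc]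
      have : (q : ℚ) ≠ 0 := by positivity
      push_cast
      field_simp
    · rw [N0_cons]; exact parSt_step _ _ _ _ _ _ hP

theorem frac_unique (p q P Q : ℕ) (hq : 0 < q) (hQ : 0 < Q) (h1 : Nat.Coprime p q)
    (h2 : Nat.Coprime P Q) (h : (p : ℚ) / q = (P : ℚ) / Q) : p = P ∧ q = Q := by
  have := Rat.div_int_inj (a := p) (b := q) (c := P) (d := Q) (by exact_mod_cast hq)
    (by exact_mod_cast hQ) (by simpa using h1) (by simpa using h2) (by simpa using h)
  exact_mod_cast this

theorem coprime_of_det (p q u v : ℕ) (h : (q : ℤ) * v - u * p = 1) : Nat.Coprime p q := by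
  rw [← Nat.isCoprime_iff_coprime]
  exact ⟨-u, v, by linarith⟩

/-- let `p/q` be irreducible with `0 < p < q`, `p` odd, `q` odd, with
pair of parents `(x/r, y/s)`, and let `p/q = [0, a₁, …, aₙ]` with `n` even and all
`aᵢ` positive.  Then `N₀(a₁, …, aₙ)` is even iff `y` is even, and `N₀(a₁, …, aₙ)` is
odd iff `x` is even. -/
theorem N0_parity_of_one_one_type (p q : ℕ) (hp : 0 < p) (hpq : p < q)
    (hcop : Nat.Coprime p q) (hpodd : Odd p) (hqodd : Odd q)
    (x r y s : ℕ) (hpar : IsParents x r y s ((p : ℚ) / (q : ℚ)))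
    (l : List ℕ) (hlen : Even l.length) (hpos : ∀ a ∈ l, 0 < a)
    (hcf : cf (0 :: l) = (p : ℚ) / (q : ℚ)) :
    (Even (N0 l) ↔ Even y) ∧ (Odd (N0 l) ↔ Even x) := by
  obtain ⟨hr, hs, hdet, hα⟩ := hpar
  obtain ⟨Q, u, P, v, hQ, huQ, -, hd, hc, hP⟩ := cf_matrix l hpos
  rw [hlen.neg_one_pow] at hd
  obtain ⟨rfl, rfl⟩ := frac_unique p q P Q (by omega) hQ hcop (coprime_of_det _ _ _ _ hd)
    (hcf.symm.trans hc)
  have hdZ : (r : ℤ) * y = x * s + 1 := by exact_mod_cast hdet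
  have hd2 : ((r + s : ℕ) : ℤ) * y - s * (x + y : ℕ) = 1 := by
    push_cast; linarith
  obtain ⟨h1, h2⟩ := frac_unique p q (x + y) (r + s) (by omega) (by omega) hcop
    (coprime_of_det _ _ _ _ hd2) (by push_cast; exact hα)
  rw [← h1, ← h2] at hd2
  have hdvd : (q : ℤ) ∣ (u : ℤ) - s := by
    have hco : IsCoprime (q : ℤ) (p : ℤ) := (Nat.isCoprime_iff_coprime.2 hcop).symm
    apply hco.dvd_of_dvd_mul_right
    exact ⟨v - y, by linarith⟩
  have hu0 : 0 < u := by
    rcases Nat.eq_zero_or_pos u with h | h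
    · subst h
      have : (q : ℤ) ∣ 1 := ⟨v, by push_cast at hd; linarith⟩
      have := Int.le_of_dvd one_pos this
      omega
    · exact h
  have hus : (u : ℤ) - s = 0 := by
    apply Int.eq_zero_of_abs_lt_dvd hdvd
    rw [abs_lt]; constructor <;> omega
  have hus' : (u : ℤ) = s := by linarith
  have hvy : (v : ℤ) = y := by
    rw [hus'] at hd
    have : (q : ℤ) * v = q * y := by linarith
    exact mul_left_cancel₀ (by positivity) this
  have hvy' : v = y := by exact_mod_cast hvy
  subst hvy'
  rw [Nat.odd_iff] at hpodd hqodd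
  simp only [Nat.even_iff, Nat.odd_iff]
  unfold ParSt at hP
  omega
end

section
/- The weight wt is well defined: if [a0, a1, …, an] = [b0, b1, …, bm] as rational numbers, where a0, b0 are nonnegative integers and a1, …, an, b1, …, bm are positive integers, then the weight computed from the first expansion equals the weight computed from the second expansion. -/
/-- The alternating sum `a₀ - a₁ + a₂ - ⋯` of a list. -/
def altSum : List ℕ → ℤ
  | [] => 0
  | a :: t => (a : ℤ) - altSum t

/-- The weight of the continued fraction expansion `[a₀, a₁, …, aₙ]`:
`a₀ - a₁ + a₂ - ⋯ + (-1)ⁿ aₙ` if `n` is even, and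
`a₀ - a₁ + a₂ - ⋯ + (-1)ⁿ aₙ + 2` if `n` is odd. -/
def wtExp (a₀ : ℕ) (t : List ℕ) : ℤ :=
  altSum (a₀ :: t) + (if Even t.length then 0 else 2)

theorem cf_cons (a : ℕ) (t : List ℕ) : cf (a :: t) = (a : ℚ) + 1 / cf t := by
  cases t <;> simp [cf]

theorem cf_nonneg (t : List ℕ) : 0 ≤ cf t := by
  induction t with
  | nil => simp [cf]
  | cons a t ih => rw [cf_cons]; positivity

theorem cf_ge_one (a : ℕ) (t : List ℕ) (ha : 0 < a) : 1 ≤ cf (a :: t) := by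
  have h1 : (1 : ℚ) ≤ a := by exact_mod_cast ha
  have h2 : 0 ≤ 1 / cf t := one_div_nonneg.mpr (cf_nonneg t)
  rw [cf_cons]; linarith

theorem inv_bounds (x : ℚ) (h : 1 ≤ x) : 0 < 1 / x ∧ 1 / x ≤ 1 :=
  ⟨by positivity, by rw [div_le_one (by linarith)]; exact h⟩

theorem cf_eq_one (a : ℕ) (t : List ℕ) (ha : 0 < a) (ht : ∀ x ∈ t, 0 < x)
    (h : cf (a :: t) = 1) : a = 1 ∧ t = [] := by
  have h1 : (1 : ℚ) ≤ a := by exact_mod_cast ha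
  cases t with
  | nil => simpa [cf] using h
  | cons b t =>
    have h2 := inv_bounds _ (cf_ge_one b t (ht b (by simp)))
    rw [cf_cons] at h
    linarith [h2.1]

theorem wtExp_cons (a b : ℕ) (t : List ℕ) :
    wtExp a (b :: t) = a + 2 - wtExp b t := by
  simp only [wtExp, altSum, List.length_cons, Nat.even_add_one]
  by_cases h : Even t.length <;> simp [h] <;> ring

theorem wt_nil (a b : ℕ) (m : List ℕ) (hm : ∀ x ∈ m, 0 < x)
    (h : cf [a] = cf (b :: m)) : wtExp a [] = wtExp b m := by
  cases m with
  | nil =>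
    have : a = b := by simpa [cf] using h
    rw [this]
  | cons c t =>
    have h2 := inv_bounds _ (cf_ge_one c t (hm c (by simp)))
    rw [cf_cons b] at h
    simp only [cf] at h
    have h3 : b < a := by
      have : (b : ℚ) < a := by linarith [h2.1]
      exact_mod_cast this
    have h4 : a ≤ b + 1 := by
      have : (a : ℚ) ≤ b + 1 := by linarith [h2.2]
      exact_mod_cast this
    obtain rfl : a = b + 1 := by omega
    push_cast at h
    have h5 : 1 / cf (c :: t) = 1 := by linarith
    have h6 : cf (c :: t) = 1 := by simpa using h5
    obtain ⟨rfl, rfl⟩ := cf_eq_one c t (hm c (by simp))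
      (fun x hx => hm x (by simp [hx])) h6
    simp [wtExp, altSum]
    ring

/-- the weight is well defined: two continued fraction expansions
`[a₀, a₁, …, aₙ] = [b₀, b₁, …, b_m]` (with `a₀, b₀ ≥ 0` and all the other entries
positive) representing the same rational number have equal weights. -/
theorem wt_well_defined (a₀ b₀ : ℕ) (l m : List ℕ)
    (hl : ∀ x ∈ l, 0 < x) (hm : ∀ x ∈ m, 0 < x)
    (h : cf (a₀ :: l) = cf (b₀ :: m)) :
    wtExp a₀ l = wtExp b₀ m := by
  induction l generalizing a₀ b₀ m with
  | nil => exact wt_nil a₀ b₀ m hm h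
  | cons c s ih =>
    cases m with
    | nil => exact (wt_nil b₀ a₀ (c :: s) hl h.symm).symm
    | cons d t =>
      have h1 := inv_bounds _ (cf_ge_one c s (hl c (by simp)))
      have h2 := inv_bounds _ (cf_ge_one d t (hm d (by simp)))
      rw [cf_cons a₀, cf_cons b₀] at h
      have h3 : a₀ < b₀ + 1 := by
        have : (a₀ : ℚ) < b₀ + 1 := by linarith [h1.1, h2.2]
        exact_mod_cast this
      have h4 : b₀ < a₀ + 1 := by
        have : (b₀ : ℚ) < a₀ + 1 := by linarith [h2.1, h1.2]
        exact_mod_cast this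
      obtain rfl : a₀ = b₀ := by omega
      have h5 : cf (c :: s) = cf (d :: t) := by simpa using h
      rw [wtExp_cons, wtExp_cons, ih c d t (fun x hx => hl x (by simp [hx]))
        (fun x hx => hm x (by simp [hx])) h5]
end
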